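/- Let h, p > 0 and let Q be a nonnegative integer. Then the function G_Q(λ) = h·Σ_{i=0}^{Q} (e^{−λ}·λ^i/i!)·(Q−i) + p·Σ_{i=Q}^{∞} (e^{−λ}·λ^i/i!)·(i−Q) is convex in λ on (0,∞). -/

import Mathlib

/-!
For a Poisson demand `D` of rate `x`, the derivative of `E f(D)` with respect to `x` is `E (Δf)(D)`:
the exponential generating function `F(x) = ∑ f(i) xⁱ / i!` is differentiated by shifting its
coefficients, and `E f(D) = exp(-x) F(x)`. Hence the second derivative is `E (Δ²f)(D)`, and `E f(D)`
is convex in `x ≥ 0` whenever `f` is a convex sequence. The newsvendor cost is the expectation of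
`f(i) = h (Q - i)⁺ + p (i - Q)⁺`, whose slope jumps from `-h` to `p` at `Q`, so that `Δ²f` is
`h + p` at `i = Q - 1` and vanishes elsewhere.
-/

open scoped Nat fwdDiff

section ExpGenFun

/-- The exponential generating function of the sequence `f`; up to the factor `exp (-x)` it is the
Poisson expectation of `f` at rate `x`. -/
noncomputable def expGenFun (f : ℕ → ℝ) (x : ℝ) : ℝ :=
  ∑' i : ℕ, x ^ i / (i ! : ℝ) * f i

/-- The sequence `f` has an everywhere convergent exponential generating function. This is the
integrability condition under which Poisson expectations of `f` may be differentiated in the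
rate. -/
def ExpGenSummable (f : ℕ → ℝ) : Prop :=
  ∀ x : ℝ, Summable fun i : ℕ => x ^ i / (i ! : ℝ) * f i

variable {f g : ℕ → ℝ}

theorem pow_succ_div_factorial_succ_mul (x : ℝ) (i : ℕ) :
    x ^ (i + 1) / ((i + 1)! : ℝ) * (i + 1) = x * (x ^ i / (i ! : ℝ)) := by
  rw [Nat.factorial_succ]
  push_cast
  field_simp
  ring

theorem hasDerivAt_pow_succ_div_factorial (i : ℕ) (x : ℝ) :
    HasDerivAt (fun y : ℝ => y ^ (i + 1) / ((i + 1)! : ℝ)) (x ^ i / (i ! : ℝ)) x := by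
  refine ((hasDerivAt_pow (i + 1) x).div_const _).congr_deriv ?_
  rw [Nat.factorial_succ]
  push_cast
  field_simp

theorem abs_pow_div_factorial_mul_le {x R : ℝ} (hx : |x| ≤ R) (i : ℕ) (a : ℝ) :
    |x ^ i / (i ! : ℝ) * a| ≤ R ^ i / (i ! : ℝ) * |a| := by
  rw [abs_mul, abs_div, abs_pow, Nat.abs_cast]
  gcongr

namespace ExpGenSummable

theorem of_abs_le_geometric {C r : ℝ} (hf : ∀ i, |f i| ≤ C * r ^ i) : ExpGenSummable f := by
  intro x
  refine .of_norm_bounded ((Real.summable_pow_div_factorial (|x| * r)).mul_left C) fun i => ?_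
  calc |x ^ i / (i ! : ℝ) * f i|
      ≤ |x| ^ i / (i ! : ℝ) * |f i| := abs_pow_div_factorial_mul_le le_rfl i (f i)
    _ ≤ |x| ^ i / (i ! : ℝ) * (C * r ^ i) := by gcongr; exact hf i
    _ = C * ((|x| * r) ^ i / (i ! : ℝ)) := by ring

theorem add (hf : ExpGenSummable f) (hg : ExpGenSummable g) :
    ExpGenSummable fun i => f i + g i :=
  fun x => ((hf x).add (hg x)).congr fun i => by ring

theorem const_mul (hf : ExpGenSummable f) (c : ℝ) : ExpGenSummable fun i => c * f i :=
  fun x => ((hf x).mul_left c).congr fun i => by ring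

theorem abs (hf : ExpGenSummable f) : ExpGenSummable fun i => |f i| := fun x =>
  .of_norm_bounded (hf |x|).abs fun i => by simp [abs_mul, abs_div]

-- The factor `i + 1 ≤ 2 ^ (i + 1)` lost by shifting is absorbed by doubling the argument.
theorem shift (hf : ExpGenSummable f) : ExpGenSummable fun i => f (i + 1) := by
  intro x
  rcases eq_or_ne x 0 with rfl | hx
  · exact summable_of_ne_finset_zero (s := {0}) fun i hi => by simp_all
  have tail_summable := (summable_nat_add_iff 1).2 (hf.abs (2 * |x|))
  refine .of_norm_bounded (tail_summable.mul_left |x|⁻¹) fun i => ?_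
  have cast_le_two_pow : (i : ℝ) + 1 ≤ 2 ^ (i + 1) := by
    exact_mod_cast (i + 1).lt_two_pow_self.le
  calc |x ^ i / (i ! : ℝ) * f (i + 1)|
      ≤ |x| ^ i / (i ! : ℝ) * |f (i + 1)| := abs_pow_div_factorial_mul_le le_rfl _ _
    _ = |x|⁻¹ * (|x| ^ (i + 1) / ((i + 1)! : ℝ) * (i + 1) * |f (i + 1)|) := by
        rw [pow_succ_div_factorial_succ_mul]; field_simp
    _ ≤ |x|⁻¹ * (|x| ^ (i + 1) / ((i + 1)! : ℝ) * 2 ^ (i + 1) * |f (i + 1)|) := by gcongr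
    _ = |x|⁻¹ * ((2 * |x|) ^ (i + 1) / ((i + 1)! : ℝ) * |f (i + 1)|) := by ring

theorem fwdDiff (hf : ExpGenSummable f) : ExpGenSummable (Δ_[1] f) :=
  fun x => ((hf.shift x).sub (hf x)).congr fun i => by simp only [_root_.fwdDiff]; ring

end ExpGenSummable

theorem expGenFun_eq_add_tsum_succ (hf : ExpGenSummable f) (x : ℝ) :
    expGenFun f x = f 0 + ∑' i : ℕ, x ^ (i + 1) / ((i + 1)! : ℝ) * f (i + 1) := by
  rw [expGenFun, (hf x).tsum_eq_zero_add]
  simp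

theorem hasDerivAt_expGenFun (hf : ExpGenSummable f) (x : ℝ) :
    HasDerivAt (expGenFun f) (expGenFun (fun i => f (i + 1)) x) x := by
  have tail_summable : Summable fun i : ℕ => x ^ (i + 1) / ((i + 1)! : ℝ) * f (i + 1) :=
    (summable_nat_add_iff 1).2 (hf x)
  have x_mem : x ∈ Metric.ball (0 : ℝ) (|x| + 1) := by simp
  have tail_hasDerivAt :
      HasDerivAt (fun y : ℝ => ∑' i : ℕ, y ^ (i + 1) / ((i + 1)! : ℝ) * f (i + 1))
        (expGenFun (fun i => f (i + 1)) x) x :=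
    hasDerivAt_tsum_of_isPreconnected (hf.shift.abs (|x| + 1)) Metric.isOpen_ball
      (convex_ball 0 (|x| + 1)).isPreconnected
      (fun i y _ => (hasDerivAt_pow_succ_div_factorial i y).mul_const (f (i + 1)))
      (fun i y hy => abs_pow_div_factorial_mul_le (mem_ball_zero_iff.1 hy).le i _)
      x_mem tail_summable x_mem
  rw [funext (expGenFun_eq_add_tsum_succ hf)]
  exact tail_hasDerivAt.const_add (f 0)

theorem expGenFun_fwdDiff (hf : ExpGenSummable f) (x : ℝ) :
    expGenFun (Δ_[1] f) x = expGenFun (fun i => f (i + 1)) x - expGenFun f x := by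
  simp only [expGenFun, fwdDiff, mul_sub]
  exact (hf.shift x).tsum_sub (hf x)

end ExpGenFun

section PoissonExpectation

/-- The expectation of `f` under the Poisson distribution of rate `x`. The defining series makes
sense for every real `x`, so that the derivative in the rate can be taken on all of `ℝ`. -/
noncomputable def poissonExpectation (f : ℕ → ℝ) (x : ℝ) : ℝ :=
  ∑' i : ℕ, Real.exp (-x) * x ^ i / (i ! : ℝ) * f i

variable {f g : ℕ → ℝ}

theorem poissonExpectation_eq_exp_neg_mul_expGenFun (f : ℕ → ℝ) (x : ℝ) :
    poissonExpectation f x = Real.exp (-x) * expGenFun f x := by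
  simp only [poissonExpectation, expGenFun, ← tsum_mul_left, mul_div_assoc, mul_assoc]

theorem poissonExpectation_const_mul (c : ℝ) (f : ℕ → ℝ) (x : ℝ) :
    poissonExpectation (fun i => c * f i) x = c * poissonExpectation f x := by
  simp only [poissonExpectation, mul_left_comm _ c, tsum_mul_left]

theorem poissonExpectation_add (hf : ExpGenSummable f) (hg : ExpGenSummable g) (x : ℝ) :
    poissonExpectation (fun i => f i + g i) x =
      poissonExpectation f x + poissonExpectation g x := by
  simp only [poissonExpectation_eq_exp_neg_mul_expGenFun, expGenFun, mul_add]
  rw [(hf x).tsum_add (hg x), mul_add]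

theorem poissonExpectation_nonneg (hf : 0 ≤ f) {x : ℝ} (hx : 0 ≤ x) :
    0 ≤ poissonExpectation f x :=
  tsum_nonneg fun i => mul_nonneg (by positivity) (hf i)

theorem hasDerivAt_poissonExpectation (hf : ExpGenSummable f) (x : ℝ) :
    HasDerivAt (poissonExpectation f) (poissonExpectation (Δ_[1] f) x) x := by
  rw [funext (poissonExpectation_eq_exp_neg_mul_expGenFun f),
    poissonExpectation_eq_exp_neg_mul_expGenFun, expGenFun_fwdDiff hf]
  exact ((hasDerivAt_neg x).exp.mul (hasDerivAt_expGenFun hf x)).congr_deriv (by ring)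

theorem convexOn_poissonExpectation (hf : ExpGenSummable f) (hconvex : 0 ≤ Δ_[1] (Δ_[1] f)) :
    ConvexOn ℝ (Set.Ici 0) (poissonExpectation f) :=
  convexOn_of_hasDerivWithinAt2_nonneg (convex_Ici 0)
    (fun x _ => (hasDerivAt_poissonExpectation hf x).continuousAt.continuousWithinAt)
    (fun x _ => (hasDerivAt_poissonExpectation hf x).hasDerivWithinAt)
    (fun x _ => (hasDerivAt_poissonExpectation hf.fwdDiff x).hasDerivWithinAt)
    (fun _ hx => poissonExpectation_nonneg hconvex (interior_subset hx))

end PoissonExpectation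

section Newsvendor

/-- The cost of ordering `Q` units when the demand is `i`, with unit overage cost `h` and unit
underage cost `p`. Truncated subtraction of natural numbers plays the role of the positive part. -/
def newsvendorCost (h p : ℝ) (Q i : ℕ) : ℝ :=
  h * ((Q - i : ℕ) : ℝ) + p * ((i - Q : ℕ) : ℝ)

theorem expGenSummable_overage (Q : ℕ) : ExpGenSummable fun i => ((Q - i : ℕ) : ℝ) :=
  .of_abs_le_geometric (C := Q) (r := 1) fun i => by simp

theorem expGenSummable_underage (Q : ℕ) : ExpGenSummable fun i => ((i - Q : ℕ) : ℝ) :=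
  .of_abs_le_geometric (C := 1) (r := 2) fun i => by
    rw [Nat.abs_cast, one_mul]
    exact_mod_cast (Nat.sub_le i Q).trans i.lt_two_pow_self.le

theorem expGenSummable_newsvendorCost (h p : ℝ) (Q : ℕ) :
    ExpGenSummable (newsvendorCost h p Q) :=
  ((expGenSummable_overage Q).const_mul h).add ((expGenSummable_underage Q).const_mul p)

theorem fwdDiff_newsvendorCost (h p : ℝ) (Q i : ℕ) :
    Δ_[1] (newsvendorCost h p Q) i = if i < Q then -h else p := by
  simp only [fwdDiff, newsvendorCost]
  split_ifs with hi
  · rw [Nat.sub_eq_zero_of_le (Nat.succ_le_of_lt hi), Nat.sub_eq_zero_of_le hi.le,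
      Nat.cast_sub (Nat.succ_le_of_lt hi), Nat.cast_sub hi.le]
    push_cast
    ring
  · have hQi : Q ≤ i := not_lt.1 hi
    rw [Nat.sub_eq_zero_of_le (hQi.trans i.le_succ), Nat.sub_eq_zero_of_le hQi,
      Nat.cast_sub (hQi.trans i.le_succ), Nat.cast_sub hQi]
    push_cast
    ring

theorem fwdDiff_fwdDiff_newsvendorCost (h p : ℝ) (Q i : ℕ) :
    Δ_[1] (Δ_[1] (newsvendorCost h p Q)) i = if i + 1 = Q then h + p else 0 := by
  rw [fwdDiff, fwdDiff_newsvendorCost, fwdDiff_newsvendorCost]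
  grind

theorem poissonExpectation_overage (Q : ℕ) (x : ℝ) :
    poissonExpectation (fun i => ((Q - i : ℕ) : ℝ)) x =
      ∑ i ∈ Finset.range (Q + 1), Real.exp (-x) * x ^ i / (i ! : ℝ) * ((Q : ℝ) - (i : ℝ)) := by
  rw [poissonExpectation, tsum_eq_sum (s := Finset.range (Q + 1))]
  · refine Finset.sum_congr rfl fun i hi => ?_
    rw [Nat.cast_sub (Finset.mem_range_succ_iff.1 hi)]
  · intro i hi
    have hQi : Q ≤ i := by grind
    rw [Nat.sub_eq_zero_of_le hQi, Nat.cast_zero, mul_zero]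

theorem poissonExpectation_underage (Q : ℕ) (x : ℝ) :
    poissonExpectation (fun i => ((i - Q : ℕ) : ℝ)) x =
      ∑' i : ℕ, Real.exp (-x) * x ^ (Q + i) / ((Q + i)! : ℝ) * (i : ℝ) := by
  rw [poissonExpectation, ← (add_right_injective Q).tsum_eq]
  · simp only [Nat.add_sub_cancel_left]
  · intro i hi
    have hQi : Q ≤ i := by
      contrapose! hi
      simp [Nat.sub_eq_zero_of_le hi.le]
    exact ⟨i - Q, Nat.add_sub_of_le hQi⟩

theorem poissonExpectation_newsvendorCost (h p : ℝ) (Q : ℕ) (x : ℝ) :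
    poissonExpectation (newsvendorCost h p Q) x =
      h * poissonExpectation (fun i => ((Q - i : ℕ) : ℝ)) x +
      p * poissonExpectation (fun i => ((i - Q : ℕ) : ℝ)) x := by
  rw [← poissonExpectation_const_mul, ← poissonExpectation_const_mul]
  exact poissonExpectation_add ((expGenSummable_overage Q).const_mul h)
    ((expGenSummable_underage Q).const_mul p) x

end Newsvendor

theorem newsvendor_poisson_convex_in_rate_general
    (h p : ℝ) (hhp : 0 ≤ h + p) (Q : ℕ) :
    ConvexOn ℝ (Set.Ici (0 : ℝ)) (fun lam : ℝ =>
      h * ∑ i ∈ Finset.range (Q + 1),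
            (Real.exp (-lam) * lam ^ i / (i.factorial : ℝ)) * ((Q : ℝ) - (i : ℝ)) +
      p * ∑' i : ℕ,
            (Real.exp (-lam) * lam ^ (Q + i) / ((Q + i).factorial : ℝ)) * (i : ℝ)) := by
  have cost_convex : 0 ≤ Δ_[1] (Δ_[1] (newsvendorCost h p Q)) := fun i => by
    rw [fwdDiff_fwdDiff_newsvendorCost]
    exact ite_nonneg hhp le_rfl
  simp only [← poissonExpectation_overage, ← poissonExpectation_underage,
    ← poissonExpectation_newsvendorCost]
  exact convexOn_poissonExpectation (expGenSummable_newsvendorCost h p Q) cost_convex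

/-- Convexity of the Poisson-demand newsvendor cost `G_Q(λ)` in the rate `λ`
on `(0,∞)`, for fixed order quantity `Q`. -/
theorem newsvendor_poisson_convex_in_rate
    (h p : ℝ) (hh : 0 < h) (hp : 0 < p) (Q : ℕ) :
    ConvexOn ℝ (Set.Ioi (0 : ℝ)) (fun lam : ℝ =>
      h * ∑ i ∈ Finset.range (Q + 1),
            (Real.exp (-lam) * lam ^ i / (i.factorial : ℝ)) * ((Q : ℝ) - (i : ℝ)) +
      p * ∑' i : ℕ,
            (Real.exp (-lam) * lam ^ (Q + i) / ((Q + i).factorial : ℝ)) * (i : ℝ)) :=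
  (newsvendor_poisson_convex_in_rate_general h p (add_pos hh hp).le Q).subset
    Set.Ioi_subset_Ici_self (convex_Ioi 0)
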